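/- (Classification of ideals: converse) Let V₀ and V be ℚ-subspaces of ℚ(ker μ) such that V has the ker μ-stability (and V = 0 if μ = 0). Then the subspace 𝔥 := V₀ ⊕ ⊕_{x̄ ∈ (H/ker μ) \ {0̄}} T(x̄)(V) is an ideal of the homological Goldman Lie algebra ℚH. -/

import Mathlib

/-!
For `v` supported on `ker μ`, the bracket satisfies `[[x], T(y) v] = ⟨x, y⟩ • T(x + y) v`
(`bracket_transl`), because `⟨x, y + k⟩ = ⟨x, y⟩` for `k ∈ ker μ`. With `y = 0` this shows that
`V₀` is central. For `y` representing a nonzero coset, either `⟨x, y⟩ = 0` and the bracket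
vanishes, or `⟨x + y, y⟩ = ⟨x, y⟩ ≠ 0`, so that `x + y ∉ ker μ` and `T(x + y) v` lies in the piece
of the nonzero coset of `x + y`; the `ker μ`-stability of `V` makes that piece independent of the
representative (`transl_mem_piecesOf`).
-/

open Finsupp

variable {H : Type*} [AddCommGroup H]

/-- The kernel of the `ℤ`-linear map `μ : H → Hom_ℤ(H, ℤ)` induced by the
alternating form `ω`, i.e. `ker μ = {x ∈ H | ∀ y, ⟨x, y⟩ = 0}`. -/
def kerMu (ω : H →ₗ[ℤ] H →ₗ[ℤ] ℤ) : AddSubgroup H where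
  carrier := {x | ∀ y, ω x y = 0}
  add_mem' := by
    intro a b ha hb y
    simp [map_add, ha y, hb y]
  zero_mem' := by intro y; simp
  neg_mem' := by
    intro a ha y
    simp [map_neg, ha y]

/-- The translation operator `T(x)` on `ℚH = H →₀ ℚ`, the `ℚ`-linear map with
`T(x)([y]) = [x + y]`. -/
noncomputable def transl (x : H) : (H →₀ ℚ) →ₗ[ℚ] (H →₀ ℚ) :=
  Finsupp.lmapDomain ℚ ℚ (fun y => x + y)

open Classical in
/-- The family of graded pieces of `V₀ ⊕ ⊕_{x̄ ≠ 0̄} T(x̄)(V)`: the piece of degree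
`0̄` is `V₀`, and the piece of degree `x̄ ≠ 0̄` is `T(x̄)(V) := T(x)(V)` for a
representative `x` of the coset `x̄` (well-defined when `V` is `ker μ`-stable). -/
noncomputable def piecesOf (ω : H →ₗ[ℤ] H →ₗ[ℤ] ℤ) (V₀ V : Submodule ℚ (H →₀ ℚ)) :
    H ⧸ kerMu ω → Submodule ℚ (H →₀ ℚ) :=
  fun c => if c = 0 then V₀ else Submodule.map (transl (Quotient.out c)) V

lemma transl_single (x y : H) (q : ℚ) : transl x (single y q) = single (x + y) q := by
  simp [transl, Finsupp.lmapDomain_apply, Finsupp.mapDomain_single]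

lemma transl_transl (x y : H) (v : H →₀ ℚ) : transl x (transl y v) = transl (x + y) v := by
  induction v using Finsupp.induction_linear with
  | zero => simp
  | add f g hf hg => simp only [map_add, hf, hg]
  | single a q => simp only [transl_single, add_assoc]

lemma transl_zero (v : H →₀ ℚ) : transl (0 : H) v = v := by
  induction v using Finsupp.induction_linear with
  | zero => simp
  | add f g hf hg => simp only [map_add, hf, hg]
  | single a q => simp only [transl_single, zero_add]

lemma form_kerMu_right (ω : H →ₗ[ℤ] H →ₗ[ℤ] ℤ) (halt : ∀ x : H, ω x x = 0)
    (x : H) {k : H} (hk : k ∈ kerMu ω) : ω x k = 0 := by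
  have h := halt (x + k)
  have hkx : ∀ y, ω k y = 0 := hk
  simpa [halt, hkx] using h

/-- Bracketing with `[x]` acts on the translate by `y` of an element of `ℚ(ker μ)` as
`⟨x, y⟩` times translation by `x`. -/
lemma bracket_transl (ω : H →ₗ[ℤ] H →ₗ[ℤ] ℤ) (halt : ∀ x : H, ω x x = 0)
    (B : (H →₀ ℚ) →ₗ[ℚ] (H →₀ ℚ) →ₗ[ℚ] (H →₀ ℚ))
    (hB : ∀ x y : H,
      B (single x 1) (single y 1) = (ω x y : ℚ) • single (x + y) (1 : ℚ))
    (x y : H) {v : H →₀ ℚ} (hv : v ∈ Finsupp.supported ℚ ℚ (kerMu ω : Set H)) :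
    B (single x 1) (transl y v) = (ω x y : ℚ) • transl (x + y) v := by
  rw [Finsupp.supported_eq_span_single] at hv
  induction hv using Submodule.span_induction with
  | mem w hw =>
    obtain ⟨k, hk, rfl⟩ := hw
    simp only [transl_single, hB, map_add, form_kerMu_right ω halt x hk, add_zero, add_assoc]
  | zero => simp
  | add f g _ _ hf hg => simp only [map_add, hf, hg, smul_add]
  | smul q f _ hf => rw [map_smul, map_smul, hf, map_smul, smul_comm]

/-- The piece of a nonzero coset contains `T(z)(V)` for every representative `z`. -/
lemma transl_mem_piecesOf (ω : H →ₗ[ℤ] H →ₗ[ℤ] ℤ) (V₀ V : Submodule ℚ (H →₀ ℚ))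
    (hVstab : ∀ v ∈ kerMu ω, Submodule.map (transl v) V ≤ V)
    {z : H} (hz : z ∉ kerMu ω) {v : H →₀ ℚ} (hv : v ∈ V) :
    transl z v ∈ piecesOf ω V₀ V (z : H ⧸ kerMu ω) := by
  have hc : (z : H ⧸ kerMu ω) ≠ 0 := fun h => hz ((QuotientAddGroup.eq_zero_iff z).1 h)
  have hk : -Quotient.out (z : H ⧸ kerMu ω) + z ∈ kerMu ω :=
    QuotientAddGroup.eq.1 (Quotient.out_eq (z : H ⧸ kerMu ω))
  rw [piecesOf, if_neg hc]
  refine ⟨transl (-Quotient.out (z : H ⧸ kerMu ω) + z) v, hVstab _ hk ⟨v, hv, rfl⟩, ?_⟩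
  rw [transl_transl, add_neg_cancel_left]

/-- **Classification of ideals: converse.** If `V₀` and `V` are
subspaces of `ℚ(ker μ)` with `V` `ker μ`-stable (`V = 0` if `μ = 0`), then
`𝔥 := V₀ ⊕ ⊕_{x̄ ∈ (H/ker μ) \ {0̄}} T(x̄)(V)` is an ideal of `ℚH`. -/
theorem ideal_classification_converse
    (ω : H →ₗ[ℤ] H →ₗ[ℤ] ℤ) (halt : ∀ x : H, ω x x = 0)
    (B : (H →₀ ℚ) →ₗ[ℚ] (H →₀ ℚ) →ₗ[ℚ] (H →₀ ℚ))
    (hB : ∀ x y : H,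
      B (single x 1) (single y 1) = (ω x y : ℚ) • single (x + y) (1 : ℚ))
    (V₀ V : Submodule ℚ (H →₀ ℚ))
    (hV₀ : V₀ ≤ Finsupp.supported ℚ ℚ (kerMu ω : Set H))
    (hV : V ≤ Finsupp.supported ℚ ℚ (kerMu ω : Set H))
    (hVstab : ∀ v ∈ kerMu ω, Submodule.map (transl v) V ≤ V)
    (hVzero : ω = 0 → V = ⊥) :
    ∀ X Y : H →₀ ℚ, Y ∈ (⨆ c : H ⧸ kerMu ω, piecesOf ω V₀ V c) →
      B X Y ∈ (⨆ c : H ⧸ kerMu ω, piecesOf ω V₀ V c) := by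
  intro X Y hY
  induction X using Finsupp.induction_linear with
  | zero => simp
  | add f g hf hg =>
    rw [map_add, LinearMap.add_apply]
    exact add_mem hf hg
  | single x q =>
    have hq : (single x q : H →₀ ℚ) = q • single x 1 := by simp
    rw [hq, map_smul, LinearMap.smul_apply]
    refine Submodule.smul_mem _ _ ?_
    induction hY using Submodule.iSup_induction' with
    | zero => simp
    | add f g _ _ hf hg =>
      rw [map_add]
      exact add_mem hf hg
    | mem c w hw =>
      by_cases hc : c = 0
      · rw [piecesOf, if_pos hc] at hw
        have h := bracket_transl ω halt B hB x 0 (hV₀ hw)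
        rw [transl_zero] at h
        simp [h]
      · rw [piecesOf, if_neg hc] at hw
        obtain ⟨v, hv, rfl⟩ := hw
        rw [bracket_transl ω halt B hB x _ (hV hv)]
        by_cases h0 : ω x (Quotient.out c) = 0
        · simp [h0]
        · have hz : x + Quotient.out c ∉ kerMu ω := by
            intro hmem
            have h := hmem (Quotient.out c)
            rw [map_add, LinearMap.add_apply, halt, add_zero] at h
            exact h0 h
          exact Submodule.smul_mem _ _
            (Submodule.mem_iSup_of_mem _ (transl_mem_piecesOf ω V₀ V hVstab hz hv))
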